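/- arXiv:2410.00853 — 2 statements merged into one kernel-verified Lean document; each statement's English description precedes it below -/
import Mathlib

section
/- Let X and Y be topological spaces and let η : X → Y and ρ : Y → X be continuous maps such that ρ ∘ η = id_X and η(ρ(y)) ∈ closure({y}) for every y ∈ Y. Then ρ is a closed map, and moreover for every y ∈ Y one has closure({ρ(y)}) = η⁻¹(closure({y})); in particular ρ(y) is a generic point of the closed set η⁻¹(closure({y})). -/
set_option autoImplicit false

namespace NCTTG

/-- Object-level skeleton of a big (rigidly-compactly-generated, not necessarily
braided) monoidal triangulated category `K`: objects, an isomorphism relation,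
zero and unit objects, tensor product, shift, biproducts, set-indexed
coproducts, distinguished triangles (recorded as the predicate `Tri A B C`,
meaning that there is a distinguished triangle `A ⟶ B ⟶ C ⟶ ΣA`), vanishing of
Hom-groups, and the class of compact objects (the compact part `K^c`, which is
a rigid tensor subcategory containing the unit). -/
structure BigMTC where
  Obj : Type
  Iso : Obj → Obj → Prop
  iso_refl : ∀ A, Iso A A
  iso_symm : ∀ {A B}, Iso A B → Iso B A
  iso_trans : ∀ {A B C}, Iso A B → Iso B C → Iso A C
  zero : Obj
  one : Obj
  tensor : Obj → Obj → Obj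
  shift : Obj → Obj
  shiftInv : Obj → Obj
  biprod : Obj → Obj → Obj
  coprod : ∀ {ι : Type}, (ι → Obj) → Obj
  Tri : Obj → Obj → Obj → Prop
  HomZero : Obj → Obj → Prop
  Compact : Obj → Prop
  tensor_congr : ∀ {A A' B B'}, Iso A A' → Iso B B' → Iso (tensor A B) (tensor A' B')
  tensor_one : ∀ A, Iso (tensor A one) A
  one_tensor : ∀ A, Iso (tensor one A) A
  tensor_assoc : ∀ A B C, Iso (tensor (tensor A B) C) (tensor A (tensor B C))
  tensor_zero : ∀ A, Iso (tensor A zero) zero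
  zero_tensor : ∀ A, Iso (tensor zero A) zero
  tensor_coprod : ∀ {ι : Type} (A : Obj) (f : ι → Obj),
    Iso (tensor A (coprod f)) (coprod fun i => tensor A (f i))
  coprod_tensor : ∀ {ι : Type} (A : Obj) (f : ι → Obj),
    Iso (tensor (coprod f) A) (coprod fun i => tensor (f i) A)
  shift_congr : ∀ {A B}, Iso A B → Iso (shift A) (shift B)
  shift_shiftInv : ∀ A, Iso (shift (shiftInv A)) A
  shiftInv_shift : ∀ A, Iso (shiftInv (shift A)) A
  shift_tensor : ∀ A B, Iso (shift (tensor A B)) (tensor (shift A) B)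
  biprod_congr : ∀ {A A' B B'}, Iso A A' → Iso B B' → Iso (biprod A B) (biprod A' B')
  biprod_zero : ∀ A, Iso (biprod A zero) A
  tri_congr : ∀ {A A' B B' C C'}, Iso A A' → Iso B B' → Iso C C' → Tri A B C → Tri A' B' C'
  tri_id : ∀ A, Tri A A zero
  tri_rot : ∀ {A B C}, Tri A B C → Tri B C (shift A)
  tri_biprod : ∀ A B, Tri A (biprod A B) B
  tri_tensor_left : ∀ {A B C} (D : Obj), Tri A B C → Tri (tensor D A) (tensor D B) (tensor D C)
  tri_tensor_right : ∀ {A B C} (D : Obj), Tri A B C → Tri (tensor A D) (tensor B D) (tensor C D)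
  compact_zero : Compact zero
  compact_one : Compact one
  compact_iso : ∀ {A B}, Iso A B → Compact A → Compact B
  compact_shift : ∀ {A}, Compact A → Compact (shift A)
  compact_shiftInv : ∀ {A}, Compact A → Compact (shiftInv A)
  compact_tensor : ∀ {A B}, Compact A → Compact B → Compact (tensor A B)
  compact_biprod : ∀ {A B}, Compact A → Compact B → Compact (biprod A B)

/-- A thick (two-sided tensor) ideal of the compact part `K^c` of `T`. -/
structure ThickIdeal (T : BigMTC) where
  carrier : Set T.Obj
  subset_compact : ∀ A ∈ carrier, T.Compact A
  zero_mem : T.zero ∈ carrier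
  iso_closed : ∀ {A B}, T.Iso A B → A ∈ carrier → B ∈ carrier
  shift_mem : ∀ {A}, A ∈ carrier → T.shift A ∈ carrier
  shiftInv_mem : ∀ {A}, A ∈ carrier → T.shiftInv A ∈ carrier
  ext_closed : ∀ {A B C}, T.Tri A B C → A ∈ carrier → C ∈ carrier → T.Compact B → B ∈ carrier
  summand_closed : ∀ {A B}, T.Compact A → T.Compact B → T.biprod A B ∈ carrier → A ∈ carrier
  tensor_left_mem : ∀ {A} (B : T.Obj), T.Compact B → A ∈ carrier → T.tensor B A ∈ carrier
  tensor_right_mem : ∀ {A} (B : T.Obj), T.Compact B → A ∈ carrier → T.tensor A B ∈ carrier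

/-- A prime thick ideal of `K^c`: a proper thick ideal `P` such that
`I ⊗ J ⊆ P` implies `I ⊆ P` or `J ⊆ P` for all thick ideals `I, J`.
These are the points of the Balmer spectrum `Spc K^c`. -/
structure PrimeIdeal (T : BigMTC) extends ThickIdeal T where
  proper : ∃ A, T.Compact A ∧ A ∉ carrier
  isPrime : ∀ I J : ThickIdeal T,
    (∀ A ∈ I.carrier, ∀ B ∈ J.carrier, T.tensor A B ∈ carrier) →
    I.carrier ⊆ carrier ∨ J.carrier ⊆ carrier

/-- The (noncommutative) Balmer support `supp^B(A) = {P ∈ Spc K^c : A ∉ P}`. -/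
def suppB (T : BigMTC) (A : T.Obj) : Set (PrimeIdeal T) := {P | A ∉ P.carrier}

/-- The topology of the Balmer spectrum: the closed sets are generated by the
supports `supp^B(S) = {P : P ∩ S = ∅}` of arbitrary families `S` of objects. -/
instance spcTopology (T : BigMTC) : TopologicalSpace (PrimeIdeal T) :=
  TopologicalSpace.generateFrom
    {U | ∃ S : Set T.Obj, U = {P : PrimeIdeal T | ∃ A ∈ S, A ∈ P.carrier}}

/-- `Φ_{supp^B}(I) = ⋃_{A ∈ I} supp^B(A)`. -/
def PhiB (T : BigMTC) (I : ThickIdeal T) : Set (PrimeIdeal T) :=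
  ⋃ A ∈ I.carrier, suppB T A

/-- `D` is (the object class of) a thick subcategory of the compact part `K^c`. -/
def IsThickSubcat (T : BigMTC) (D : Set T.Obj) : Prop :=
  (∀ A ∈ D, T.Compact A) ∧ T.zero ∈ D ∧
  (∀ A B, T.Iso A B → A ∈ D → B ∈ D) ∧
  (∀ A, A ∈ D → T.shift A ∈ D) ∧ (∀ A, A ∈ D → T.shiftInv A ∈ D) ∧
  (∀ A B C, T.Tri A B C → A ∈ D → C ∈ D → T.Compact B → B ∈ D) ∧
  (∀ A B, T.Compact A → T.Compact B → T.biprod A B ∈ D → A ∈ D)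

/-- `K^c` is finitely generated: it has a thick generator, i.e. a compact object
`G` such that the smallest thick subcategory of `K^c` containing `G` is all of `K^c`. -/
def FinitelyGenerated (T : BigMTC) : Prop :=
  ∃ G, T.Compact G ∧
    ∀ D : Set T.Obj, IsThickSubcat T D → G ∈ D → ∀ A, T.Compact A → A ∈ D

/-- `S` is the carrier of a thick ideal of `K^c`. -/
def IsThickIdealSet (T : BigMTC) (S : Set T.Obj) : Prop :=
  ∃ I : ThickIdeal T, I.carrier = S

/-- The thick ideal `⟨S⟩` of `K^c` generated by a collection `S` of compact objects. -/
def thickIdealGen (T : BigMTC) (S : Set T.Obj) : Set T.Obj :=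
  ⋂₀ {C | IsThickIdealSet T C ∧ S ⊆ C}

/-- `D` is (the object class of) a localizing subcategory of `K`. -/
def IsLocalizing (T : BigMTC) (D : Set T.Obj) : Prop :=
  T.zero ∈ D ∧
  (∀ A B, T.Iso A B → A ∈ D → B ∈ D) ∧
  (∀ A, A ∈ D → T.shift A ∈ D) ∧ (∀ A, A ∈ D → T.shiftInv A ∈ D) ∧
  (∀ A B, T.biprod A B ∈ D → A ∈ D) ∧
  (∀ A B C, T.Tri A B C → A ∈ D → C ∈ D → B ∈ D) ∧
  (∀ (ι : Type) (f : ι → T.Obj), (∀ i, f i ∈ D) → T.coprod f ∈ D)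

/-- `Loc(S)`: the smallest localizing subcategory of `K` containing `S`. -/
def Loc (T : BigMTC) (S : Set T.Obj) : Set T.Obj :=
  ⋂₀ {D | IsLocalizing T D ∧ S ⊆ D}

/-- `D` is a localizing tensor ideal of `K`. -/
def IsLocTensorIdeal (T : BigMTC) (D : Set T.Obj) : Prop :=
  IsLocalizing T D ∧ ∀ A ∈ D, ∀ B, T.tensor A B ∈ D ∧ T.tensor B A ∈ D

/-- `Loc^⊗(S)`: the smallest localizing tensor ideal of `K` containing `S`. -/
def LocTensor (T : BigMTC) (S : Set T.Obj) : Set T.Obj :=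
  ⋂₀ {D | IsLocTensorIdeal T D ∧ S ⊆ D}

/-- The right orthogonal `S^⊥ = {B : Hom(A, B) = 0 for all A ∈ S}`. -/
def Perp (T : BigMTC) (S : Set T.Obj) : Set T.Obj :=
  {B | ∀ A ∈ S, T.HomZero A B}

/-- A choice of Rickard idempotents for `T`: for each thick ideal `I` of `K^c`
(given by its carrier set), objects `Γ_I 1 = Gam I` and `L_I 1 = Lf I` fitting
into a distinguished triangle `Γ_I 1 → 1 → L_I 1 → ΣΓ_I 1` with
`Γ_I 1 ∈ Loc(I)` and `L_I 1 ∈ Loc(I)^⊥`.  (By `Γ_I A ≅ Γ_I 1 ⊗ A` and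
`L_I A ≅ L_I 1 ⊗ A`, these objects determine the Rickard idempotent functors.) -/
structure RickardData (T : BigMTC) where
  Gam : Set T.Obj → T.Obj
  Lf : Set T.Obj → T.Obj
  tri : ∀ S : Set T.Obj, IsThickIdealSet T S → T.Tri (Gam S) T.one (Lf S)
  gam_mem : ∀ S : Set T.Obj, IsThickIdealSet T S → Gam S ∈ Loc T S
  lf_mem : ∀ S : Set T.Obj, IsThickIdealSet T S → Lf S ∈ Perp T (Loc T S)

/-- A support datum `(X, σ)` on the compact part `K^c` of `T`, with values in
the closed subsets of a `T₀` topological space `X`. -/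
structure SupportDatum (T : BigMTC) (X : Type*) [TopologicalSpace X] [T0Space X] where
  σ : T.Obj → Set X
  isClosed : ∀ {A}, T.Compact A → IsClosed (σ A)
  iso_congr : ∀ {A B}, T.Iso A B → σ A = σ B
  one_eq : σ T.one = Set.univ
  zero_eq : σ T.zero = ∅
  biprod_eq : ∀ {A B}, T.Compact A → T.Compact B → σ (T.biprod A B) = σ A ∪ σ B
  shift_eq : ∀ {A}, T.Compact A → σ (T.shift A) = σ A
  tri_subset : ∀ {A B C}, T.Compact A → T.Compact B → T.Compact C →
    T.Tri A B C → σ A ⊆ σ B ∪ σ C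
  tensor_subset : ∀ {A B}, T.Compact A → T.Compact B → σ (T.tensor A B) ⊆ σ A ∩ σ B

/-- A support datum is tensorial if
`⋃_{B ∈ K^c} σ(A ⊗ B ⊗ C) = σ(A) ∩ σ(C)` for all compact `A, C`. -/
def Tensorial {X : Type*} [TopologicalSpace X] [T0Space X]
    (T : BigMTC) (s : SupportDatum T X) : Prop :=
  ∀ A C, T.Compact A → T.Compact C →
    (⋃ B ∈ {B : T.Obj | T.Compact B}, s.σ (T.tensor (T.tensor A B) C)) = s.σ A ∩ s.σ C

/-- A support datum is faithful if `σ(A) = ∅` implies `A ≅ 0`. -/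
def Faithful {X : Type*} [TopologicalSpace X] [T0Space X]
    (T : BigMTC) (s : SupportDatum T X) : Prop :=
  ∀ A, T.Compact A → s.σ A = ∅ → T.Iso A T.zero

/-- A support datum is realizing if every closed subset of `X` is the support
of some compact object. -/
def Realizing {X : Type*} [TopologicalSpace X] [T0Space X]
    (T : BigMTC) (s : SupportDatum T X) : Prop :=
  ∀ V : Set X, IsClosed V → ∃ A, T.Compact A ∧ s.σ A = V

/-- `η : X → Spc K^c` is the universal map of a (tensorial) support datum:
the continuous map satisfying `σ(A) = η⁻¹(supp^B(A))` for all compact `A`. -/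
def IsUniversalMap {X : Type*} [TopologicalSpace X] [T0Space X]
    (T : BigMTC) (s : SupportDatum T X) (η : X → PrimeIdeal T) : Prop :=
  Continuous η ∧ ∀ A, T.Compact A → s.σ A = η ⁻¹' suppB T A

/-- `ρ` is a comparison map for the support datum `s` with universal map `η`:
a continuous left inverse of `η` such that `η(ρ(P)) ⊆ P` for all `P ∈ Spc K^c`. -/
def IsComparison {X : Type*} [TopologicalSpace X] [T0Space X]
    (T : BigMTC) (s : SupportDatum T X) (η : X → PrimeIdeal T)
    (ρ : PrimeIdeal T → X) : Prop :=
  Continuous ρ ∧ (∀ x, ρ (η x) = x) ∧ ∀ P, (η (ρ P)).carrier ⊆ P.carrier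

/-- `Θ(S)`: the compact objects whose support is contained in `S ⊆ X`. -/
def Theta {X : Type*} (T : BigMTC) (σ : T.Obj → Set X) (S : Set X) : Set T.Obj :=
  {A | T.Compact A ∧ σ A ⊆ S}

/-- `Γ_S 1 := Γ_{Θ(S)} 1` for a subset `S ⊆ X`. -/
def gammaSet {X : Type*} (T : BigMTC) (R : RickardData T)
    (σ : T.Obj → Set X) (S : Set X) : T.Obj :=
  R.Gam (Theta T σ S)

/-- `L_S 1 := L_{Θ(S)} 1` for a subset `S ⊆ X`. -/
def lSet {X : Type*} (T : BigMTC) (R : RickardData T)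
    (σ : T.Obj → Set X) (S : Set X) : T.Obj :=
  R.Lf (Theta T σ S)

/-- `Γ_x 1 := Γ_{V(x)} 1 ⊗ L_{Z(x)} 1`, where `V(x)` is the closure of `{x}`
and `Z(x) = {y : x ∉ closure {y}}`. -/
def gammaPt {X : Type*} [TopologicalSpace X] (T : BigMTC) (R : RickardData T)
    (σ : T.Obj → Set X) (x : X) : T.Obj :=
  T.tensor (gammaSet T R σ (closure {x})) (lSet T R σ {y | x ∉ closure {y}})

/-- The extension `σ̃(A) = {x ∈ X : Γ_x 1 ⊗ A ≠ 0}` of a support datum to all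
of `K`. -/
def extSupp {X : Type*} [TopologicalSpace X] (T : BigMTC) (R : RickardData T)
    (σ : T.Obj → Set X) (A : T.Obj) : Set X :=
  {x | ¬ T.Iso (T.tensor (gammaPt T R σ x) A) T.zero}

end NCTTG

namespace NCTTG

/-!
A continuous map is monotone for specialization, so `y ⤳ η (ρ y)` and `ρ (η x) = x` are the unit
and counit of an adjunction: `ρ y ⤳ x` if and only if `y ⤳ η x`. Read as an equality of sets of
points `x`, this says that the closure of `ρ y` is the preimage under `η` of the closure of `y`.
For closedness, a closed set `C` contains `η (ρ y)` along with `y`, whence `ρ '' C = η ⁻¹' C`.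
-/

section

open Function

variable {X Y : Type*} [TopologicalSpace Y] {η : X → Y} {ρ : Y → X}

theorem image_eq_preimage_of_specializes {s : Set Y} (hs : StableUnderSpecialization s)
    (hretr : LeftInverse ρ η) (hspec : ∀ y, y ⤳ η (ρ y)) : ρ '' s = η ⁻¹' s :=
  Set.Subset.antisymm (Set.image_subset_iff.2 fun y hy => hs (hspec y) hy)
    (Set.preimage_subset_image_of_inverse hretr s)

variable [TopologicalSpace X]

theorem isClosedMap_of_leftInverse_of_specializes (hη : Continuous η)
    (hretr : LeftInverse ρ η) (hspec : ∀ y, y ⤳ η (ρ y)) : IsClosedMap ρ := by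
  intro C hC
  rw [image_eq_preimage_of_specializes hC.stableUnderSpecialization hretr hspec]
  exact hC.preimage hη

theorem specializes_iff_specializes_of_unit_counit
    (hη : ∀ ⦃x x' : X⦄, x ⤳ x' → η x ⤳ η x') (hρ : ∀ ⦃y y' : Y⦄, y ⤳ y' → ρ y ⤳ ρ y')
    (hunit : ∀ y, y ⤳ η (ρ y)) (hcounit : ∀ x, ρ (η x) ⤳ x) (y : Y) (x : X) :
    ρ y ⤳ x ↔ y ⤳ η x :=
  ⟨fun h => (hunit y).trans (hη h), fun h => (hρ h).trans (hcounit x)⟩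

theorem isGenericPoint_preimage_closure_singleton_iff {x : X} {y : Y} :
    IsGenericPoint x (η ⁻¹' closure {y}) ↔ ∀ x', x ⤳ x' ↔ y ⤳ η x' := by
  simp only [isGenericPoint_iff_specializes, Set.mem_preimage, specializes_iff_mem_closure]

end

theorem comparison_map_closed_and_generic_general
    {X Y : Type*} [TopologicalSpace X] [TopologicalSpace Y]
    (η : X → Y) (ρ : Y → X) (hη : Continuous η) (hρ : ∀ ⦃y y' : Y⦄, y ⤳ y' → ρ y ⤳ ρ y')
    (hretr : ∀ x, ρ (η x) = x) (hspec : ∀ y, η (ρ y) ∈ closure {y}) :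
    IsClosedMap ρ ∧ ∀ y, IsGenericPoint (ρ y) (η ⁻¹' closure {y}) := by
  have hunit (y : Y) : y ⤳ η (ρ y) := specializes_iff_mem_closure.2 (hspec y)
  have hcounit (x : X) : ρ (η x) ⤳ x := specializes_of_eq (hretr x)
  refine ⟨isClosedMap_of_leftInverse_of_specializes hη hretr hunit, fun y => ?_⟩
  exact isGenericPoint_preimage_closure_singleton_iff.2
    (specializes_iff_specializes_of_unit_counit (fun _ _ h => h.map hη) hρ hunit hcounit y)

/-- If `η : X → Y` and `ρ : Y → X` are continuous maps with
`ρ ∘ η = id_X` and `η(ρ(y)) ∈ closure {y}` for every `y`, then `ρ` is a closed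
map, `closure {ρ(y)} = η⁻¹(closure {y})` for every `y`, and in particular
`ρ(y)` is a generic point of the closed set `η⁻¹(closure {y})`. -/
theorem comparison_map_closed_and_generic
    {X Y : Type*} [TopologicalSpace X] [TopologicalSpace Y]
    (η : X → Y) (ρ : Y → X) (hη : Continuous η) (hρ : Continuous ρ)
    (hretr : ∀ x, ρ (η x) = x) (hspec : ∀ y, η (ρ y) ∈ closure {y}) :
    IsClosedMap ρ ∧
    (∀ y, closure {ρ y} = η ⁻¹' closure {y}) ∧
    (∀ y, ρ y ∈ η ⁻¹' closure {y}) := by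
  obtain ⟨hclosed, hgeneric⟩ :=
    comparison_map_closed_and_generic_general η ρ hη (fun _ _ h => h.map hρ) hretr hspec
  exact ⟨hclosed, fun y => (hgeneric y).def, fun y => (hgeneric y).mem⟩

end NCTTG
end

section
/- Let X and Y be topological spaces and let η : X → Y and ρ : Y → X be continuous maps such that ρ ∘ η = id_X and η(ρ(y)) ∈ closure({y}) for every y ∈ Y. Then for every quasicompact open subset U ⊆ X, the preimage ρ⁻¹(U) is quasicompact. Consequently, if V ⊆ X is Thomason-closed, then ρ⁻¹(V) is Thomason-closed in Y. -/
set_option autoImplicit false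

namespace NCTTG

/-- A subset is Thomason-closed if it is a union of closed sets each of which
has quasicompact complement. -/
def IsThomasonClosed {X : Type*} [TopologicalSpace X] (V : Set X) : Prop :=
  ∃ 𝒱 : Set (Set X), (∀ W ∈ 𝒱, IsClosed W ∧ IsCompact Wᶜ) ∧ V = ⋃₀ 𝒱

/-!
Every point `y` specializes to `η (ρ y)`, so an open set containing `η '' K` already contains
`ρ ⁻¹' K`. When `ρ ∘ η` maps `K` to itself, `ρ ⁻¹' K` thus lies between the compact set `η '' K` and
the intersection `nhdsKer (η '' K)` of all its open neighbourhoods.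
-/

lemma isCompact_of_subset_nhdsKer {X : Type*} [TopologicalSpace X] {K S : Set X}
    (hK : IsCompact K) (hKS : K ⊆ S) (hSK : S ⊆ nhdsKer K) : IsCompact S := by
  have hker : nhdsKer S = nhdsKer K :=
    ((nhdsKer_subset_nhdsKer hSK).trans_eq (nhdsKer_nhdsKer K)).antisymm
      (nhdsKer_subset_nhdsKer hKS)
  rwa [← IsCompact.nhdsKer_iff, hker, IsCompact.nhdsKer_iff]

lemma preimage_subset_nhdsKer_image {X Y : Type*} [TopologicalSpace Y] {η : X → Y} {ρ : Y → X}
    (hηρ : ∀ y, y ⤳ η (ρ y)) (K : Set X) :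
    ρ ⁻¹' K ⊆ nhdsKer (η '' K) := fun y hy =>
  mem_nhdsKer_iff_specializes.2 ⟨η (ρ y), Set.mem_image_of_mem η hy, hηρ y⟩

lemma IsThomasonClosed.preimage {X Y : Type*} [TopologicalSpace X] [TopologicalSpace Y]
    {f : Y → X} {V : Set X} (hV : IsThomasonClosed V) (hf : IsSpectralMap f) :
    IsThomasonClosed (f ⁻¹' V) := by
  obtain ⟨𝒱, h𝒱, rfl⟩ := hV
  refine ⟨Set.preimage f '' 𝒱, ?_, by rw [Set.preimage_sUnion, Set.sUnion_image]⟩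
  rintro _ ⟨W, hW, rfl⟩
  obtain ⟨hclosed, hcompact⟩ := h𝒱 W hW
  exact ⟨hclosed.preimage hf.continuous,
    hf.isCompact_preimage_of_isOpen hclosed.isOpen_compl hcompact⟩

section Specializes

variable {X Y : Type*} [TopologicalSpace X] [TopologicalSpace Y] {η : X → Y} {ρ : Y → X}

lemma isCompact_preimage_of_specializes (hη : Continuous η) (hηρ : ∀ y, y ⤳ η (ρ y))
    {K : Set X} (hK : IsCompact K) (hρη : Set.MapsTo (ρ ∘ η) K K) : IsCompact (ρ ⁻¹' K) :=
  isCompact_of_subset_nhdsKer (hK.image hη) (Set.image_subset_iff.2 hρη)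
    (preimage_subset_nhdsKer_image hηρ K)

lemma isSpectralMap_of_specializes (hη : Continuous η) (hρ : Continuous ρ)
    (hρη : ∀ x, ρ (η x) ⤳ x) (hηρ : ∀ y, y ⤳ η (ρ y)) : IsSpectralMap ρ where
  toContinuous := hρ
  isCompact_preimage_of_isOpen _ hU hUc :=
    isCompact_preimage_of_specializes hη hηρ hUc fun x hx => (hρη x).mem_open hU hx

theorem comparison_map_preimage_quasicompact_thomason_general
    (hη : Continuous η) (hρ : Continuous ρ)
    (hρη : ∀ x, ρ (η x) ⤳ x) (hηρ : ∀ y, y ⤳ η (ρ y)) :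
    (∀ K : Set X, IsCompact K → Set.MapsTo (ρ ∘ η) K K → IsCompact (ρ ⁻¹' K)) ∧
    (∀ V : Set X, IsThomasonClosed V → IsThomasonClosed (ρ ⁻¹' V)) :=
  ⟨fun _ => isCompact_preimage_of_specializes hη hηρ,
    fun _ hV => hV.preimage (isSpectralMap_of_specializes hη hρ hρη hηρ)⟩

end Specializes

/-- If `η : X → Y` and `ρ : Y → X` are continuous maps with
`ρ ∘ η = id_X` and `η(ρ(y)) ∈ closure {y}` for every `y`, then the `ρ`-preimage
of every quasicompact open subset of `X` is quasicompact, and consequently the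
`ρ`-preimage of every Thomason-closed subset of `X` is Thomason-closed. -/
theorem comparison_map_preimage_quasicompact_thomason
    {X Y : Type*} [TopologicalSpace X] [TopologicalSpace Y]
    (η : X → Y) (ρ : Y → X) (hη : Continuous η) (hρ : Continuous ρ)
    (hretr : ∀ x, ρ (η x) = x) (hspec : ∀ y, η (ρ y) ∈ closure {y}) :
    (∀ U : Set X, IsOpen U → IsCompact U → IsCompact (ρ ⁻¹' U)) ∧
    (∀ V : Set X, IsThomasonClosed V → IsThomasonClosed (ρ ⁻¹' V)) := by
  obtain ⟨hcompact, hthomason⟩ := comparison_map_preimage_quasicompact_thomason_general hη hρ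
    (fun x => specializes_of_eq (hretr x)) (fun y => specializes_iff_mem_closure.2 (hspec y))
  exact ⟨fun U _ hU => hcompact U hU fun x hx => Set.mem_of_eq_of_mem (hretr x) hx, hthomason⟩

end NCTTG
end
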